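/- arXiv:1412.3701 — 2 statements merged into one kernel-verified Lean document; each statement's English description precedes it below -/
import Mathlib

section
/- For every n > 1 let Σ_I = Σ_O = {1,…,n,#} and let L'_n ⊆ (Σ_I × Σ_O)^ω be defined by: for a word with first-component sequence α and second-component sequence β, set j = β(0) and α' = α(1)α(2)α(3)⋯; if j ∈ {1,…,n}, then the word is in L'_n iff either α' contains no # or α' contains a bad j-pair strictly before its first occurrence of #; if j = #, then the word is in L'_n iff at most one occurrence of the letter n appears in α' before its first occurrence of # (before the end of the word if no # occurs). Then (i) there is a constant c such that for every n > 1, L'_n = L_∀(A'_n) for a deterministic safety automaton A'_n with at most c·n states; (ii) Player O wins Γ_f(L'_n) for every constant delay function f with f(0) > 2^n; and (iii) Player I wins Γ_f(L'_n) for every delay function f with f(0) ≤ 2^n. -/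
/-!
The combinatorial core is that a word over `{1, …, k}` of length `2 ^ k` contains a bad pair
(`exists_bad`: the largest letter either occurs twice, giving a bad pair, or is missing from one
of the two halves), while the ruler sequence `p ↦ v₂ p` for `1 ≤ p < 2 ^ n` has none
(`ruler_no_bad`: between two odd multiples of `2 ^ j` lies a multiple of `2 ^ (j + 1)`).

* A deterministic safety automaton remembers the first output letter `j` together with one bit:
  for `j ∈ {1, …, n}`, whether `j` has occurred with no larger letter since; for `j = #`, whether
  `n` has occurred. Together with an initial state and two sinks this gives `2n + 5` states.
* If `f 0 > 2 ^ n`, Player O sees at least `2 ^ n` letters of `α'` before committing. She names a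
  letter with a bad pair before the first `#` if there is one. Otherwise a `#` must be visible and
  the letter `n` occurs at most once before it, so she answers `#`.
* If `f 0 ≤ 2 ^ n`, Player I opens with the ruler sequence. He answers `j ∈ {1, …, n}` by `#`
  forever, and `#` by `n` forever.
-/

namespace DelayGames

/-- A delay function: positive in every round. -/
def IsDelay (f : ℕ → ℕ) : Prop := ∀ i, 1 ≤ f i

/-- A constant delay function: `f i = 1` for all `i > 0`. -/
def IsConstant (f : ℕ → ℕ) : Prop := ∀ i, 0 < i → f i = 1

section Games

variable {I O : Type*}

/-- `α` is the ω-word obtained by concatenating the blocks `u 0, u 1, u 2, …`: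
every finite concatenation of initial blocks is a prefix of `α`. -/
def IsCat (u : ℕ → List I) (α : ℕ → I) : Prop :=
  ∀ i, ((List.range i).map u).flatten =
    (List.range (((List.range i).map u).flatten.length)).map α

/-- The blocks of Player I have the lengths prescribed by the delay function. -/
def ValidBlocks (f : ℕ → ℕ) (u : ℕ → List I) : Prop := ∀ i, (u i).length = f i

/-- The play `(u, v)` is consistent with the strategy `τ` of Player O:
in every round, `v i` is prescribed by `τ` applied to `u 0 ⋯ u i`. -/
def ConsistentO (τ : List I → O) (u : ℕ → List I) (v : ℕ → O) : Prop :=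
  ∀ i, v i = τ (((List.range (i + 1)).map u).flatten)

/-- The play `(u, v)` is consistent with the strategy `τ` of Player I:
in every round, `u i` is prescribed by `τ` applied to `v 0 ⋯ v (i-1)`. -/
def ConsistentI (τ : List O → List I) (u : ℕ → List I) (v : ℕ → O) : Prop :=
  ∀ i, u i = τ ((List.range i).map v)

/-- Player O wins the delay game `Γ_f(L)`: she has a strategy such that every
consistent play (against blocks of the prescribed lengths) has its outcome in `L`. -/
def WinsO (f : ℕ → ℕ) (L : Set (ℕ → I × O)) : Prop :=
  ∃ τ : List I → O, ∀ u v α, ValidBlocks f u → ConsistentO τ u v → IsCat u α →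
    (fun n => (α n, v n)) ∈ L

/-- Player I wins the delay game `Γ_f(L)`: he has a strategy respecting the
lengths prescribed by `f` such that no consistent play has its outcome in `L`. -/
def WinsI (f : ℕ → ℕ) (L : Set (ℕ → I × O)) : Prop :=
  ∃ τ : List O → List I, (∀ w, (τ w).length = f w.length) ∧
    ∀ u v α, ConsistentI τ u v → IsCat u α → (fun n => (α n, v n)) ∉ L

/-- Projection of a winning condition to the first components. -/
def projL (L : Set (ℕ → I × O)) : Set (ℕ → I) :=
  {α | ∃ β : ℕ → O, (fun n => (α n, β n)) ∈ L}

end Games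

/-- The prefix of length `k` of an ω-word. -/
def pre {A : Type*} (x : ℕ → A) (k : ℕ) : List A := (List.range k).map x

/-- `K · A^ω`: the ω-words having a finite prefix in `K`. -/
def extOmega {A : Type*} (K : Set (List A)) : Set (ℕ → A) := {x | ∃ k, pre x k ∈ K}

/-- Nondeterministic automata with a complete transition function. -/
structure NA (Q A : Type*) where
  init : Q
  trans : Q → A → Set Q
  accept : Set Q
  complete : ∀ q a, (trans q a).Nonempty

namespace NA

variable {Q A : Type*} (M : NA Q A)

/-- The automaton is deterministic. -/
def Deterministic : Prop := ∀ q a, ∃ q', M.trans q a = {q'}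

/-- The states reachable from a set of states after reading a finite word. -/
def reach (S : Set Q) (w : List A) : Set Q :=
  w.foldl (fun T a => ⋃ q ∈ T, M.trans q a) S

/-- The finite words accepted by `M` (runs from the initial state ending in `accept`). -/
def Lstar : Set (List A) := {w | (M.reach {M.init} w ∩ M.accept).Nonempty}

/-- `ρ` is a run of `M` on the ω-word `x`. -/
def IsRun (x : ℕ → A) (ρ : ℕ → Q) : Prop :=
  ρ 0 = M.init ∧ ∀ n, ρ (n + 1) ∈ M.trans (ρ n) (x n)

/-- Reachability acceptance: some run visits an accepting state at least once. -/
def Lexists : Set (ℕ → A) := {x | ∃ ρ, M.IsRun x ρ ∧ ∃ n, ρ n ∈ M.accept}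

/-- Safety acceptance: some run visits only accepting states. -/
def Lforall : Set (ℕ → A) := {x | ∃ ρ, M.IsRun x ρ ∧ ∀ n, ρ n ∈ M.accept}

/-- A state is productive if an accepting state is reachable from it. -/
def Productive (q : Q) : Prop := ∃ w, (M.reach {q} w ∩ M.accept).Nonempty

/-- A state lies on a cycle. -/
def OnCycle (q : Q) : Prop := ∃ w : List A, w ≠ [] ∧ q ∈ M.reach {q} w

/-- An automaton is acyclic if every state on a cycle is non-productive. -/
def Acyclic : Prop := ∀ q, M.OnCycle q → ¬ M.Productive q

/-- A state is reachable from the initial state. -/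
def ReachableState (q : Q) : Prop := ∃ w, q ∈ M.reach {M.init} w

/-- `k` is the depth of the (acyclic) automaton `M`: the length of a longest
path from the initial state to an accepting state. -/
def HasDepth (k : ℕ) : Prop :=
  (∀ w ∈ M.Lstar, w.length ≤ k) ∧ ∃ w ∈ M.Lstar, w.length = k

end NA

/-- Projection of an automaton over `I × O` to the alphabet `I`. -/
def NA.projI {Q I O : Type*} [Nonempty O] (M : NA Q (I × O)) : NA Q I where
  init := M.init
  trans q a := ⋃ b : O, M.trans q (a, b)
  accept := M.accept
  complete q a := by
    obtain ⟨b⟩ := ‹Nonempty O›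
    obtain ⟨q', hq'⟩ := M.complete q (a, b)
    exact ⟨q', Set.mem_iUnion.2 ⟨b, hq'⟩⟩

/-- Deterministic parity automata. -/
structure DPA (Q A : Type*) where
  init : Q
  trans : Q → A → Q
  color : Q → ℕ

/-- The maximal value occurring infinitely often in the sequence `c` exists
and is even. -/
def MaxEvenInf (c : ℕ → ℕ) : Prop :=
  ∃ k, Even k ∧ {n | c n = k}.Infinite ∧ ∀ k', {n | c n = k'}.Infinite → k' ≤ k

/-- Deterministic finite automata (acceptors for finite words). -/
structure DFAcc (S A : Type*) where
  init : S
  trans : S → A → S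
  accept : Set S

/-- The language of finite words accepted by a DFA. -/
def DFAcc.lang {S A : Type*} (D : DFAcc S A) : Set (List A) :=
  {w | w.foldl D.trans D.init ∈ D.accept}

namespace DPA

variable {Q A : Type*} (M : DPA Q A)

/-- The unique run of a deterministic automaton on an ω-word. -/
def run (x : ℕ → A) : ℕ → Q
  | 0 => M.init
  | n + 1 => M.trans (run x n) (x n)

/-- The parity language of `M`: the maximal color visited infinitely often is even. -/
def Lparity : Set (ℕ → A) := {x | MaxEvenInf fun n => M.color (M.run x n)}

/-- The number of colors of `M`. -/
def numColors [Fintype Q] : ℕ := (Finset.image M.color Finset.univ).card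

end DPA

namespace DPA

variable {Q I O : Type*} (M : DPA Q (I × O))

/-- The transition function of the color-tracking automaton `𝒞`. -/
def transC (qc : Q × ℕ) (x : I × O) : Q × ℕ :=
  (M.trans qc.1 x, max qc.2 (M.color (M.trans qc.1 x)))

/-- The initial state of the color-tracking automaton `𝒞`. -/
def initC : Q × ℕ := (M.init, M.color M.init)

/-- The valid states of `𝒞`, i.e. `Q × Ω(Q)`. -/
def QCvalid : Set (Q × ℕ) := {qc | qc.2 ∈ Set.range M.color}

/-- One step of the powerset automaton of the projection of `𝒞`. -/
def transP (S : Set (Q × ℕ)) (a : I) : Set (Q × ℕ) :=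
  ⋃ s ∈ S, ⋃ b : O, {M.transC s (a, b)}

/-- Iterated powerset transitions `δ_P^*`. -/
def transPStar (S : Set (Q × ℕ)) (w : List I) : Set (Q × ℕ) :=
  w.foldl M.transP S

/-- The domain of a partial function, represented via `Option`. -/
def rdom {Q : Type*} (r : (Q × ℕ) → Option (Set (Q × ℕ))) : Set (Q × ℕ) :=
  {qc | r qc ≠ none}

open scoped Classical in
/-- The partial function `r_w^D` with domain `D`. -/
noncomputable def rOf (D : Set (Q × ℕ)) (w : List I) :
    (Q × ℕ) → Option (Set (Q × ℕ)) :=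
  fun qc =>
    if qc ∈ D then some (M.transPStar ({(qc.1, M.color qc.1)} : Set (Q × ℕ)) w)
    else none

/-- The set `W_r` of witnesses of a partial function `r`. -/
def WitnessSet (r : (Q × ℕ) → Option (Set (Q × ℕ))) : Set (List I) :=
  {w | r = M.rOf (rdom r) w}

/-- The set `𝔉` of partial functions with nonempty domain and infinitely many
witnesses. -/
def Frak : Set ((Q × ℕ) → Option (Set (Q × ℕ))) :=
  {r | (rdom r).Nonempty ∧ (M.WitnessSet r).Infinite}

end DPA

end DelayGames

namespace DelayGames

/-- Membership in the winning condition `L'_n` over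
`Σ_I = Σ_O = {1, …, n, #}`, where the letter `k ∈ {1, …, n}` is represented by
`some k` (with `k : Fin n`, so `some v` represents the letter `v + 1`) and `#`
by `none`.  With `j = β(0)` and `α' = α(1)α(2)α(3)⋯`: if `j ∈ {1, …, n}`, the
word is in `L'_n` iff `α'` contains no `#` or `α'` contains a bad `j`-pair
strictly before its first `#`; if `j = #`, the word is in `L'_n` iff at most
one occurrence of the letter `n` appears in `α'` before its first `#`. -/
def memLsafe (n : ℕ) (x : ℕ → Option (Fin n) × Option (Fin n)) : Prop :=
  match (x 0).2 with
  | some j =>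
      (∀ k, (x (k + 1)).1 ≠ none) ∨
      ∃ i₁ i₂, i₁ < i₂ ∧ (x (i₁ + 1)).1 = some j ∧ (x (i₂ + 1)).1 = some j ∧
        (∀ i, i₁ < i → i < i₂ → ∀ v : Fin n, (x (i + 1)).1 = some v → v ≤ j) ∧
        (∀ i, i ≤ i₂ → (x (i + 1)).1 ≠ none)
  | none =>
      ∀ i₁ i₂,
        ((∀ k, k ≤ i₁ → (x (k + 1)).1 ≠ none) ∧
          ∃ v : Fin n, (x (i₁ + 1)).1 = some v ∧ (v : ℕ) + 1 = n) →
        ((∀ k, k ≤ i₂ → (x (k + 1)).1 ≠ none) ∧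
          ∃ v : Fin n, (x (i₂ + 1)).1 = some v ∧ (v : ℕ) + 1 = n) →
        i₁ = i₂

/-- The winning condition `L'_n`. -/
def Lsafe (n : ℕ) : Set (ℕ → Option (Fin n) × Option (Fin n)) :=
  {x | memLsafe n x}

/-- The ω-word `a` contains a bad `j`-pair before its first `#`. -/
def Bad {n : ℕ} (a : ℕ → Option (Fin n)) (j : Fin n) : Prop :=
  ∃ i₁ i₂, i₁ < i₂ ∧ a i₁ = some j ∧ a i₂ = some j ∧
    (∀ i, i₁ < i → i < i₂ → ∀ v : Fin n, a i = some v → v ≤ j) ∧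
    (∀ i, i ≤ i₂ → a i ≠ none)

/-- The ω-word `a` has at most one occurrence of the largest letter before its first `#`. -/
def AtMostOne {n : ℕ} (a : ℕ → Option (Fin n)) : Prop :=
  ∀ i₁ i₂,
    ((∀ k, k ≤ i₁ → a k ≠ none) ∧ ∃ v : Fin n, a i₁ = some v ∧ (v : ℕ) + 1 = n) →
    ((∀ k, k ≤ i₂ → a k ≠ none) ∧ ∃ v : Fin n, a i₂ = some v ∧ (v : ℕ) + 1 = n) →
    i₁ = i₂

lemma memLsafe_some {n : ℕ} {x : ℕ → Option (Fin n) × Option (Fin n)} {j : Fin n}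
    (h : (x 0).2 = some j) :
    memLsafe n x ↔ (∀ k, (x (k + 1)).1 ≠ none) ∨ Bad (fun k => (x (k + 1)).1) j := by
  unfold memLsafe Bad
  rw [h]

lemma memLsafe_none {n : ℕ} {x : ℕ → Option (Fin n) × Option (Fin n)}
    (h : (x 0).2 = none) :
    memLsafe n x ↔ AtMostOne (fun k => (x (k + 1)).1) := by
  unfold memLsafe AtMostOne
  rw [h]

/-! ### Words with and without bad pairs -/

lemma exists_bad {n : ℕ} (a : ℕ → Option (Fin n)) (k : ℕ) : ∀ s : ℕ,
    (∀ i, s ≤ i → i < s + 2 ^ k → ∃ v : Fin n, a i = some v ∧ (v : ℕ) < k) →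
    ∃ (j : Fin n) (i₁ i₂ : ℕ), s ≤ i₁ ∧ i₁ < i₂ ∧ i₂ < s + 2 ^ k ∧
      a i₁ = some j ∧ a i₂ = some j ∧
      ∀ i, i₁ < i → i < i₂ → ∀ v : Fin n, a i = some v → v ≤ j := by
  induction k with
  | zero =>
    intro s h
    obtain ⟨v, _, hv⟩ := h s le_rfl (by simp)
    omega
  | succ k ih =>
    intro s h
    have hpow : 2 ^ (k + 1) = 2 ^ k + 2 ^ k := by ring
    rw [hpow] at h ⊢
    by_cases h1 : ∃ p, s ≤ p ∧ p < s + 2 ^ k ∧ ∃ v : Fin n, a p = some v ∧ (v : ℕ) = k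
    · by_cases h2 : ∃ q, s + 2 ^ k ≤ q ∧ q < s + 2 ^ k + 2 ^ k ∧
          ∃ v : Fin n, a q = some v ∧ (v : ℕ) = k
      · -- the largest letter occurs in both halves
        obtain ⟨p, hp1, hp2, v, hv, hvk⟩ := h1
        obtain ⟨q, hq1, hq2, w, hw, hwk⟩ := h2
        have hvw : w = v := Fin.ext (by omega)
        subst hvw
        refine ⟨w, p, q, hp1, by omega, by omega, hv, hw, ?_⟩
        intro i hi1 hi2 z hz
        obtain ⟨z', hz', hlt⟩ := h i (by omega) (by omega)
        rw [hz] at hz'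
        cases hz'
        exact Fin.le_def.2 (by omega)
      · obtain ⟨j, i₁, i₂, h3, h4, h5, h6⟩ := ih (s + 2 ^ k) (by
          intro i hi1 hi2
          obtain ⟨v, hv, hlt⟩ := h i (by omega) (by omega)
          refine ⟨v, hv, ?_⟩
          by_contra hc
          exact h2 ⟨i, hi1, hi2, v, hv, by omega⟩)
        exact ⟨j, i₁, i₂, by omega, h4, by omega, h6⟩
    · obtain ⟨j, i₁, i₂, h3, h4, h5, h6⟩ := ih s (by
        intro i hi1 hi2
        obtain ⟨v, hv, hlt⟩ := h i (by omega) (by omega)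
        refine ⟨v, hv, ?_⟩
        by_contra hc
        exact h1 ⟨i, hi1, hi2, v, hv, by omega⟩)
      exact ⟨j, i₁, i₂, by omega, h4, by omega, h6⟩

/-- The ruler sequence `p ↦ v₂ p`, as a word over `{1, …, n, #}`; the letter at position `0`,
which belongs to `α` but not to `α'`, is irrelevant. -/
def ruler (n p : ℕ) : Option (Fin n) :=
  if h : padicValNat 2 p < n then some ⟨padicValNat 2 p, h⟩ else none

lemma ruler_eq {n p : ℕ} {j : Fin n} (h : ruler n p = some j) : padicValNat 2 p = j := by
  unfold ruler at h
  split_ifs at h with h'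
  cases h
  rfl

lemma ruler_no_bad {n p q : ℕ} {j : Fin n} (hp : 0 < p) (hpq : p < q) (hq : q < 2 ^ n)
    (h1 : ruler n p = some j) (h2 : ruler n q = some j) :
    ∃ m, p < m ∧ m < q ∧ ∃ v : Fin n, ruler n m = some v ∧ j < v := by
  have e1 := ruler_eq h1
  have e2 := ruler_eq h2
  have d1 : 2 ^ (j : ℕ) ∣ p := e1 ▸ pow_padicValNat_dvd
  have d2 : 2 ^ (j : ℕ) ∣ q := e2 ▸ pow_padicValNat_dvd
  have n1 : ¬ 2 ^ ((j : ℕ) + 1) ∣ p := e1 ▸ pow_succ_padicValNat_not_dvd hp.ne'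
  have n2 : ¬ 2 ^ ((j : ℕ) + 1) ∣ q := e2 ▸ pow_succ_padicValNat_not_dvd (by omega)
  obtain ⟨b, rfl⟩ := d1
  obtain ⟨c, rfl⟩ := d2
  have hpos : 0 < 2 ^ (j : ℕ) := by positivity
  rw [pow_succ, Nat.mul_dvd_mul_iff_left hpos] at n1 n2
  have hbc : b < c := lt_of_mul_lt_mul_left hpq (Nat.zero_le _)
  have hmc : 2 ^ (j : ℕ) * (b + 1) < 2 ^ (j : ℕ) * c :=
    Nat.mul_lt_mul_of_pos_left (by omega) hpos
  have hm0 : 2 ^ (j : ℕ) * (b + 1) ≠ 0 := by positivity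
  have hlo : (j : ℕ) + 1 ≤ padicValNat 2 (2 ^ (j : ℕ) * (b + 1)) := by
    rw [← padicValNat_dvd_iff_le hm0, pow_succ]
    exact Nat.mul_dvd_mul_left _ (by omega)
  have hhi : padicValNat 2 (2 ^ (j : ℕ) * (b + 1)) < n := by
    have := Nat.le_of_dvd (Nat.pos_of_ne_zero hm0)
      (pow_padicValNat_dvd (p := 2) (n := 2 ^ (j : ℕ) * (b + 1)))
    exact (Nat.pow_lt_pow_iff_right (by norm_num : 1 < 2)).1 (by omega)
  refine ⟨2 ^ (j : ℕ) * (b + 1), Nat.mul_lt_mul_of_pos_left (by omega) hpos, hmc,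
    ⟨_, hhi⟩, dif_pos hhi, Fin.lt_def.2 ?_⟩
  simp only
  omega

/-! ### The safety automaton -/

/-- States of the automaton: `inl 0` is initial, `inl 1` the accepting sink, `inl 2` the rejecting
sink, and `inr (j, b)` remembers the first output letter `j` and one bit `b` about the input. -/
abbrev SState (n : ℕ) : Type := Fin 3 ⊕ (Option (Fin n) × Bool)

/-- The transition function of the safety automaton. -/
def sstep {n : ℕ} : SState n → Option (Fin n) × Option (Fin n) → SState n
  | Sum.inl 0, x => Sum.inr (x.2, false)
  | Sum.inl 1, _ => Sum.inl 1
  | Sum.inl 2, _ => Sum.inl 2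
  | Sum.inr (some _, _), (none, _) => Sum.inl 2
  | Sum.inr (some j, false), (some v, _) => Sum.inr (some j, decide (v = j))
  | Sum.inr (some j, true), (some v, _) =>
      if v = j then Sum.inl 1 else Sum.inr (some j, decide (v < j))
  | Sum.inr (none, _), (none, _) => Sum.inl 1
  | Sum.inr (none, false), (some v, _) => Sum.inr (none, decide ((v : ℕ) + 1 = n))
  | Sum.inr (none, true), (some v, _) =>
      if (v : ℕ) + 1 = n then Sum.inl 2 else Sum.inr (none, true)

/-- The deterministic safety automaton for `L'_n`. -/
def sAut (n : ℕ) : NA (SState n) (Option (Fin n) × Option (Fin n)) where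
  init := Sum.inl 0
  trans q x := {sstep q x}
  accept := {q | q ≠ Sum.inl 2}
  complete _ _ := Set.singleton_nonempty _

/-- The run of the safety automaton. -/
def srun {n : ℕ} (x : ℕ → Option (Fin n) × Option (Fin n)) : ℕ → SState n
  | 0 => Sum.inl 0
  | k + 1 => sstep (srun x k) (x k)

lemma mem_sAut {n : ℕ} (x : ℕ → Option (Fin n) × Option (Fin n)) :
    x ∈ (sAut n).Lforall ↔ ∀ k, srun x (k + 1) ≠ Sum.inl 2 := by
  constructor
  · rintro ⟨ρ, ⟨h0, hs⟩, ha⟩ k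
    have : ∀ k, ρ k = srun x k := by
      intro k
      induction k with
      | zero => exact h0
      | succ k ih =>
        have := hs k
        simp only [sAut, Set.mem_singleton_iff] at this
        rw [this, ih]
        rfl
    rw [← this]
    exact ha (k + 1)
  · intro h
    refine ⟨srun x, ⟨rfl, fun k => rfl⟩, fun k => ?_⟩
    cases k with
    | zero => simp [sAut, srun]
    | succ k => exact h k

/-- State reached after `m` letters of `a = α'`, when the first output letter is `j`. The bit
records whether `j` has occurred with no larger letter since. -/
lemma srun_some {n : ℕ} (x : ℕ → Option (Fin n) × Option (Fin n)) (a : ℕ → Option (Fin n))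
    (ha : ∀ k, (x (k + 1)).1 = a k) (j : Fin n) (hj : (x 0).2 = some j) (m : ℕ) :
    (srun x (m + 1) = Sum.inl 1 ∧ Bad a j) ∨
    (srun x (m + 1) = Sum.inl 2 ∧ (∃ k, a k = none) ∧ ¬ Bad a j) ∨
    ((∀ k < m, a k ≠ none) ∧
      (∀ i₁ i₂, i₁ < i₂ → i₂ < m → a i₁ = some j → a i₂ = some j →
        ∃ i v, i₁ < i ∧ i < i₂ ∧ a i = some v ∧ j < v) ∧
      ((srun x (m + 1) = Sum.inr (some j, false) ∧
          ∀ i₁ < m, a i₁ = some j → ∃ i v, i₁ < i ∧ i < m ∧ a i = some v ∧ j < v) ∨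
        (srun x (m + 1) = Sum.inr (some j, true) ∧
          ∃ i₁ < m, a i₁ = some j ∧ ∀ i v, i₁ < i → i < m → a i = some v → v ≤ j))) := by
  induction m with
  | zero =>
    right; right
    refine ⟨by simp, by simp, Or.inl ⟨?_, by simp⟩⟩
    simp [srun, sstep, hj]
  | succ m ih =>
    have hstep : srun x (m + 1 + 1) = sstep (srun x (m + 1)) (a m, (x (m + 1)).2) := by
      rw [← ha m]; rfl
    rcases ih with ⟨h, hb⟩ | ⟨h, hb⟩ | ⟨hN, hB, ih⟩
    · left; exact ⟨by rw [hstep, h]; rfl, hb⟩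
    · right; left; exact ⟨by rw [hstep, h]; rfl, hb⟩
    · cases hm : a m with
      | none =>
        right; left
        refine ⟨?_, ⟨m, hm⟩, ?_⟩
        · rcases ih with ⟨h, _⟩ | ⟨h, _⟩ <;> rw [hstep, h, hm] <;> rfl
        · rintro ⟨i₁, i₂, h1, h2, h3, h4, h5⟩
          have hlt : i₂ < m := by
            by_contra hc
            exact h5 m (by omega) hm
          obtain ⟨i, v, g1, g2, g3, g4⟩ := hB i₁ i₂ h1 hlt h2 h3
          exact absurd (h4 i g1 g2 v g3) (not_le.2 g4)
      | some v =>
        have hN' : ∀ k < m + 1, a k ≠ none := by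
          intro k hk
          rcases Nat.lt_succ_iff_lt_or_eq.1 hk with hk | rfl
          · exact hN k hk
          · simp [hm]
        rcases ih with ⟨h, hO⟩ | ⟨h, p, hp, hpj, hO⟩
        · right; right
          refine ⟨hN', ?_, ?_⟩
          · intro i₁ i₂ h1 h2 h3 h4
            rcases Nat.lt_succ_iff_lt_or_eq.1 h2 with h2 | rfl
            · exact hB i₁ i₂ h1 h2 h3 h4
            · exact hO i₁ h1 h3
          · by_cases hv : v = j
            · right
              refine ⟨by rw [hstep, h, hm]; simp [sstep, hv], m, by omega, by rw [hm, hv], ?_⟩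
              intro i _ g1 g2
              omega
            · left
              refine ⟨by rw [hstep, h, hm]; simp [sstep, hv], ?_⟩
              intro i₁ h1 h2
              rcases Nat.lt_succ_iff_lt_or_eq.1 h1 with h1 | rfl
              · obtain ⟨i, w, g1, g2, g3⟩ := hO i₁ h1 h2
                exact ⟨i, w, g1, by omega, g3⟩
              · rw [hm] at h2
                exact absurd (Option.some.inj h2) hv
        · by_cases hv : v = j
          · left
            refine ⟨by rw [hstep, h, hm]; simp [sstep, hv], p, m, hp, hpj, by rw [hm, hv],
              fun i g1 g2 w g3 => hO i w g1 g2 g3, fun i hi => hN' i (by omega)⟩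
          · right; right
            refine ⟨hN', ?_, ?_⟩
            · intro i₁ i₂ h1 h2 h3 h4
              rcases Nat.lt_succ_iff_lt_or_eq.1 h2 with h2 | rfl
              · exact hB i₁ i₂ h1 h2 h3 h4
              · rw [hm] at h4
                exact absurd (Option.some.inj h4) hv
            · by_cases hlt : v < j
              · right
                refine ⟨by rw [hstep, h, hm]; simp [sstep, hv, hlt], p, by omega, hpj, ?_⟩
                intro i w g1 g2 g3
                rcases Nat.lt_succ_iff_lt_or_eq.1 g2 with g2 | rfl
                · exact hO i w g1 g2 g3
                · rw [hm] at g3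
                  exact Option.some.inj g3 ▸ hlt.le
              · left
                refine ⟨by rw [hstep, h, hm]; simp [sstep, hv, hlt], ?_⟩
                intro i₁ h1 h2
                rcases Nat.lt_succ_iff_lt_or_eq.1 h1 with h1 | rfl
                · exact ⟨m, v, h1, by omega, hm, lt_of_le_of_ne (not_lt.1 hlt) (Ne.symm hv)⟩
                · rw [hm] at h2
                  exact absurd (Option.some.inj h2) hv

/-- State reached after `m` letters of `a = α'`, when the first output letter is `#`. The bit
records whether the largest letter has occurred. -/
lemma srun_none {n : ℕ} (x : ℕ → Option (Fin n) × Option (Fin n)) (a : ℕ → Option (Fin n))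
    (ha : ∀ k, (x (k + 1)).1 = a k) (hj : (x 0).2 = none) (m : ℕ) :
    (srun x (m + 1) = Sum.inl 1 ∧ AtMostOne a) ∨
    (srun x (m + 1) = Sum.inl 2 ∧ ¬ AtMostOne a) ∨
    ((∀ k < m, a k ≠ none) ∧
      ((srun x (m + 1) = Sum.inr (none, false) ∧
          ∀ i < m, ∀ v : Fin n, a i = some v → (v : ℕ) + 1 ≠ n) ∨
        (srun x (m + 1) = Sum.inr (none, true) ∧
          ∃ p < m, (∃ v : Fin n, a p = some v ∧ (v : ℕ) + 1 = n) ∧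
            ∀ i < m, ∀ v : Fin n, a i = some v → (v : ℕ) + 1 = n → i = p))) := by
  induction m with
  | zero =>
    right; right
    exact ⟨by simp, Or.inl ⟨by simp [srun, sstep, hj], by simp⟩⟩
  | succ m ih =>
    have hstep : srun x (m + 1 + 1) = sstep (srun x (m + 1)) (a m, (x (m + 1)).2) := by
      rw [← ha m]; rfl
    rcases ih with ⟨h, hb⟩ | ⟨h, hb⟩ | ⟨hN, ih⟩
    · left; exact ⟨by rw [hstep, h]; rfl, hb⟩
    · right; left; exact ⟨by rw [hstep, h]; rfl, hb⟩
    · cases hm : a m with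
      | none =>
        left
        refine ⟨?_, ?_⟩
        · rcases ih with ⟨h, _⟩ | ⟨h, _⟩ <;> rw [hstep, h, hm] <;> rfl
        · rintro i₁ i₂ ⟨h1, v, h2, h3⟩ ⟨g1, w, g2, g3⟩
          have l1 : i₁ < m := by
            by_contra hc
            exact h1 m (by omega) hm
          have l2 : i₂ < m := by
            by_contra hc
            exact g1 m (by omega) hm
          rcases ih with ⟨_, hO⟩ | ⟨_, p, _, _, hO⟩
          · exact absurd h3 (hO i₁ l1 v h2)
          · rw [hO i₁ l1 v h2 h3, hO i₂ l2 w g2 g3]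
      | some v =>
        have hN' : ∀ k < m + 1, a k ≠ none := by
          intro k hk
          rcases Nat.lt_succ_iff_lt_or_eq.1 hk with hk | rfl
          · exact hN k hk
          · simp [hm]
        rcases ih with ⟨h, hO⟩ | ⟨h, p, hp, ⟨w, hw, hwn⟩, hO⟩
        · right; right
          refine ⟨hN', ?_⟩
          by_cases hv : (v : ℕ) + 1 = n
          · right
            refine ⟨by rw [hstep, h, hm]; simp [sstep, hv], m, by omega, ⟨v, hm, hv⟩, ?_⟩
            intro i hi w g1 g2
            rcases Nat.lt_succ_iff_lt_or_eq.1 hi with hi | rfl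
            · exact absurd g2 (hO i hi w g1)
            · rfl
          · left
            refine ⟨by rw [hstep, h, hm]; simp [sstep, hv], ?_⟩
            intro i hi w g1
            rcases Nat.lt_succ_iff_lt_or_eq.1 hi with hi | rfl
            · exact hO i hi w g1
            · rw [hm] at g1
              exact Option.some.inj g1 ▸ hv
        · by_cases hv : (v : ℕ) + 1 = n
          · right; left
            refine ⟨by rw [hstep, h, hm]; simp [sstep, hv], fun hA => ?_⟩
            have := hA p m ⟨fun k hk => hN' k (by omega), w, hw, hwn⟩
              ⟨fun k hk => hN' k (by omega), v, hm, hv⟩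
            omega
          · right; right
            refine ⟨hN', Or.inr ⟨by rw [hstep, h, hm]; simp [sstep, hv], p, by omega,
              ⟨w, hw, hwn⟩, ?_⟩⟩
            intro i hi z g1 g2
            rcases Nat.lt_succ_iff_lt_or_eq.1 hi with hi | rfl
            · exact hO i hi z g1 g2
            · rw [hm] at g1
              exact absurd (Option.some.inj g1 ▸ g2) hv

lemma sAut_lang (n : ℕ) : (sAut n).Lforall = Lsafe n := by
  ext x
  rw [mem_sAut]
  change _ ↔ memLsafe n x
  cases hj : (x 0).2 with
  | some j =>
    rw [memLsafe_some hj]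
    have key := srun_some x (fun k => (x (k + 1)).1) (fun _ => rfl) j hj
    constructor
    · intro h
      by_contra! hc
      obtain ⟨⟨k, hk⟩, hb⟩ := hc
      rcases key (k + 1) with ⟨_, h1⟩ | ⟨h1, _⟩ | ⟨h1, _⟩
      · exact hb h1
      · exact h _ h1
      · exact h1 k (by omega) hk
    · intro h m hm
      rcases key m with ⟨h1, _⟩ | ⟨_, ⟨k, hk⟩, hb⟩ | ⟨_, _, ⟨h1, _⟩ | ⟨h1, _⟩⟩
      · simp [h1] at hm
      · rcases h with h | h
        · exact h k hk
        · exact hb h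
      · simp [h1] at hm
      · simp [h1] at hm
  | none =>
    rw [memLsafe_none hj]
    have key := srun_none x (fun k => (x (k + 1)).1) (fun _ => rfl) hj
    constructor
    · rintro h i₁ i₂ ⟨h1, v, h2, h3⟩ ⟨g1, w, g2, g3⟩
      rcases key (i₁ + i₂ + 1) with ⟨_, hA⟩ | ⟨e, _⟩ | ⟨_, ⟨_, e⟩ | ⟨_, p, _, _, e⟩⟩
      · exact hA i₁ i₂ ⟨h1, v, h2, h3⟩ ⟨g1, w, g2, g3⟩
      · exact absurd e (h _)
      · exact absurd h3 (e i₁ (by omega) v h2)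
      · rw [e i₁ (by omega) v h2 h3, e i₂ (by omega) w g2 g3]
    · intro h m hm
      rcases key m with ⟨h1, _⟩ | ⟨_, hb⟩ | ⟨_, ⟨h1, _⟩ | ⟨h1, _⟩⟩
      · simp [h1] at hm
      · exact hb h
      · simp [h1] at hm
      · simp [h1] at hm

/-! ### The delay games -/

/-- The word `α'` as seen after the input `w`, padded with `#`. -/
def seen {n : ℕ} (w : List (Option (Fin n))) (k : ℕ) : Option (Fin n) := (w[k + 1]?).join

open scoped Classical in
/-- Player O's strategy: a letter with a bad pair before the first `#` of the word seen so far,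
or `#` if there is none. Padding by `#` makes the bad pair lie in the part already seen. -/
noncomputable def stratO {n : ℕ} (w : List (Option (Fin n))) : Option (Fin n) :=
  if h : ∃ j, Bad (seen w) j then some h.choose else none

lemma winsO {n : ℕ} {f : ℕ → ℕ} (hf : 2 ^ n < f 0) : WinsO f (Lsafe n) := by
  refine ⟨stratO, fun u v α hu hv hα => ?_⟩
  have hlen := hu 0
  have hv0 : v 0 = stratO (u 0) := by simpa using hv 0
  have hu0 : u 0 = (List.range (f 0)).map α := by
    have := hα 1
    simpa [hlen] using this
  have hseen : ∀ k, k + 1 < f 0 → seen (u 0) k = α (k + 1) := by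
    intro k hk
    simp [seen, hu0, hk]
  have hseen' : ∀ k, ¬ k + 1 < f 0 → seen (u 0) k = none := by
    intro k hk
    simp [seen, hu0, hk]
  change memLsafe n (fun k => (α k, v k))
  by_cases h : ∃ j, Bad (seen (u 0)) j
  · have hj : v 0 = some h.choose := by rw [hv0, stratO, dif_pos h]
    rw [memLsafe_some (j := h.choose) hj]
    right
    obtain ⟨i₁, i₂, h1, h2, h3, h4, h5⟩ := h.choose_spec
    have hlt : i₂ + 1 < f 0 := by
      by_contra hc
      exact h5 i₂ le_rfl (hseen' _ hc)
    refine ⟨i₁, i₂, h1, ?_, ?_, ?_, ?_⟩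
    · exact (hseen _ (by omega)).symm.trans h2
    · exact (hseen _ (by omega)).symm.trans h3
    · intro i g1 g2 z hz
      exact h4 i g1 g2 z (by rw [hseen _ (by omega)]; exact hz)
    · intro i hi
      have := h5 i hi
      rwa [hseen _ (by omega)] at this
  · have hj : v 0 = none := by rw [hv0, stratO, dif_neg h]
    rw [memLsafe_none hj]
    -- without a bad pair, a `#` occurs among the first `2 ^ n` letters
    obtain ⟨p, hp, hpn⟩ : ∃ p, p < 2 ^ n ∧ α (p + 1) = none := by
      by_contra! hc
      have hs : ∀ i, i < 2 ^ n → seen (u 0) i ≠ none := by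
        intro i hi
        rw [hseen i (by omega)]
        exact hc i hi
      obtain ⟨j, i₁, i₂, _, h1, h2, h3, h4, h5⟩ := exists_bad (seen (u 0)) n 0 (by
        intro i _ hi
        obtain ⟨z, hz⟩ := Option.ne_none_iff_exists'.1 (hs i (by omega))
        exact ⟨z, hz, z.2⟩)
      exact h ⟨j, i₁, i₂, h1, h3, h4, h5, fun i hi => hs i (by omega)⟩
    -- two occurrences of the largest letter before that `#` would form a bad pair
    have main : ∀ i₁ i₂, i₁ < i₂ → (∀ k, k ≤ i₂ → α (k + 1) ≠ none) → ∀ z w : Fin n,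
        α (i₁ + 1) = some z → (z : ℕ) + 1 = n → α (i₂ + 1) = some w → (w : ℕ) + 1 = n →
        False := by
      intro i₁ i₂ h1 h2 z w hz hzn hw hwn
      have hlt : i₂ < p := by
        by_contra hc
        exact h2 p (by omega) hpn
      have hzw : z = w := Fin.ext (by omega)
      subst hzw
      refine h ⟨z, i₁, i₂, h1, ?_, ?_, ?_, ?_⟩
      · rw [hseen _ (by omega)]; exact hz
      · rw [hseen _ (by omega)]; exact hw
      · intro i _ _ y _
        exact Fin.le_def.2 (by omega)
      · intro i hi
        rw [hseen _ (by omega)]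
        exact h2 i hi
    rintro i₁ i₂ ⟨h1, z, h2, h3⟩ ⟨g1, w, g2, g3⟩
    rcases lt_trichotomy i₁ i₂ with hlt | heq | hlt
    · exact (main i₁ i₂ hlt g1 z w h2 h3 g2 g3).elim
    · exact heq
    · exact (main i₂ i₁ hlt h1 w z g2 g3 h2 h3).elim

/-- Player I's strategy: the ruler sequence first, then `#` forever if Player O started with a
letter, and the largest letter forever if Player O started with `#`. -/
def stratI {n : ℕ} (hn : 0 < n) (f : ℕ → ℕ) : List (Option (Fin n)) → List (Option (Fin n))
  | [] => (List.range (f 0)).map (ruler n)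
  | none :: w => List.replicate (f (w.length + 1)) (some ⟨n - 1, by omega⟩)
  | some _ :: w => List.replicate (f (w.length + 1)) none

lemma winsI {n : ℕ} (hn : 0 < n) {f : ℕ → ℕ} (hd : IsDelay f) (hf : f 0 ≤ 2 ^ n) :
    WinsI f (Lsafe n) := by
  refine ⟨stratI hn f, ?_, ?_⟩
  · rintro (_ | ⟨_ | _, w⟩) <;> simp [stratI]
  intro u v α hu hα
  change ¬ memLsafe n (fun k => (α k, v k))
  have hu0 : u 0 = (List.range (f 0)).map (ruler n) := by simpa [stratI] using hu 0
  have hf0 := hd 0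
  have hf1 := hd 1
  have hf2 := hd 2
  have hα0 : ∀ p, p < f 0 → α p = ruler n p := by
    intro p hp
    have h := congrArg (fun l => l[p]?) (hα 1)
    simpa [hu0, hp] using h.symm
  -- rounds 1 and 2 append `f 1 + f 2 ≥ 2` copies of the same letter
  have htail : ∀ c, u 1 = List.replicate (f 1) c → u 2 = List.replicate (f 2) c →
      α (f 0) = c ∧ α (f 0 + 1) = c := by
    intro c h1 h2
    have h3 : u 0 ++ List.replicate (f 1 + f 2) c =
        (List.range (f 0 + (f 1 + f 2))).map α := by
      have h := hα 3
      have e : ((List.range 3).map u).flatten = u 0 ++ List.replicate (f 1 + f 2) c := by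
        simp [List.range_succ, h1, h2]
      rw [e] at h
      simpa [hu0] using h
    have h4 : ∀ k, k < f 1 + f 2 → α (f 0 + k) = c := by
      intro k hk
      have h := congrArg (fun l => l[f 0 + k]?) h3
      rw [List.getElem?_append_right (by simp [hu0])] at h
      simpa [hu0, hk] using h.symm
    exact ⟨h4 0 (by omega), h4 1 (by omega)⟩
  cases hj : v 0 with
  | some j =>
    obtain ⟨ht, -⟩ := htail none (by simpa [stratI, hj] using hu 1)
      (by simpa [stratI, hj, List.range_succ] using hu 2)
    rw [memLsafe_some (j := j) hj]
    rintro (h | ⟨i₁, i₂, h1, h2, h3, h4, h5⟩)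
    · refine h (f 0 - 1) ?_
      simpa [Nat.sub_add_cancel hf0] using ht
    · simp only at h2 h3 h4 h5
      have hlt : i₂ + 1 < f 0 := by
        by_contra hc
        refine h5 (f 0 - 1) (by omega) ?_
        simpa [Nat.sub_add_cancel hf0] using ht
      rw [hα0 _ (by omega)] at h2 h3
      obtain ⟨m, g1, g2, w, g3, g4⟩ :=
        ruler_no_bad (by omega) (by omega) (by omega) h2 h3
      have hm : m - 1 + 1 = m := by omega
      refine absurd (h4 (m - 1) (by omega) (by omega) w ?_) (not_le.2 g4)
      rw [hm, hα0 _ (by omega), g3]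
  | none =>
    obtain ⟨ht1, ht2⟩ := htail (some ⟨n - 1, by omega⟩) (by simpa [stratI, hj] using hu 1)
      (by simpa [stratI, hj, List.range_succ] using hu 2)
    rw [memLsafe_none hj]
    intro h
    have hne : ∀ k, k ≤ f 0 → α (k + 1) ≠ none := by
      intro k hk
      rcases lt_trichotomy (k + 1) (f 0) with hlt | heq | hgt
      · rw [hα0 _ hlt]
        have : padicValNat 2 (k + 1) < n := by
          have := Nat.le_of_dvd (Nat.succ_pos k)
            (pow_padicValNat_dvd (p := 2) (n := k + 1))
          exact (Nat.pow_lt_pow_iff_right (by norm_num : 1 < 2)).1 (by omega)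
        simp [ruler, this]
      · rw [heq, ht1]; simp
      · have : k = f 0 := by omega
        rw [this, ht2]; simp
    have hn1 : n - 1 + 1 = n := by omega
    have := h (f 0 - 1) (f 0)
      ⟨fun k hk => hne k (by omega), ⟨n - 1, by omega⟩,
        by simpa [Nat.sub_add_cancel hf0] using ht1, hn1⟩
      ⟨hne, ⟨n - 1, by omega⟩, ht2, hn1⟩
    omega

/-- the languages `L'_n` are recognized by deterministic safety
automata of size `O(n)`, Player O wins `Γ_f(L'_n)` for every constant delay
function with `f(0) > 2^n`, and Player I wins `Γ_f(L'_n)` for every delay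
function with `f(0) ≤ 2^n`. -/
theorem stmt5 :
    ∃ c : ℕ, ∀ n : ℕ, 1 < n →
      (∃ (Q : Type) (_ : Fintype Q) (M : NA Q (Option (Fin n) × Option (Fin n))),
          M.Deterministic ∧ Fintype.card Q ≤ c * n ∧ M.Lforall = Lsafe n) ∧
      (∀ f : ℕ → ℕ, IsDelay f → IsConstant f → 2 ^ n < f 0 → WinsO f (Lsafe n)) ∧
      (∀ f : ℕ → ℕ, IsDelay f → f 0 ≤ 2 ^ n → WinsI f (Lsafe n)) := by
  refine ⟨5, fun n hn => ⟨⟨SState n, inferInstance, sAut n, fun q a => ⟨_, rfl⟩, ?_, sAut_lang n⟩,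
    fun f _ _ h0 => winsO h0, fun f hd h0 => winsI (by omega) hd h0⟩⟩
  -- the automaton has `2n + 5` states, and `n ≥ 2`
  simp only [SState, Fintype.card_sum, Fintype.card_prod, Fintype.card_option, Fintype.card_fin,
    Fintype.card_bool]
  omega

end DelayGames
end

section
/- Let A be a deterministic parity automaton over Σ_I × Σ_O. Player O wins the delay game Γ_f(L_p(A)) for some delay function f if and only if Player O wins the delay-free abstract game G(A). -/
namespace DelayGames

namespace DPA

/-- The type of (representations of) partial functions used in the abstract
game `G(A)`. -/
abbrev RFun (Q : Type*) : Type _ := (Q × ℕ) → Option (Set (Q × ℕ))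

variable {Q I O : Type*} (M : DPA Q (I × O))

/-- The moves of Player I in the play `(r, q)` of `G(A)` are legal: all picked
functions are in `𝔉`, the first one has domain `{q_I^𝒞}`, and each later one
has domain `r_{i}(q_{i})` for the preceding moves. -/
def GLegalI (r : ℕ → RFun Q) (q : ℕ → Q × ℕ) : Prop :=
  (∀ i, r i ∈ M.Frak) ∧ rdom (r 0) = {M.initC} ∧
    ∀ i, rdom (r (i + 1)) = (r i (q i)).getD ∅

/-- The play `(r, q)` is consistent with the strategy `σ` of Player O in
`G(A)`. -/
def GConsistentO (σ : List (RFun Q × (Q × ℕ)) → RFun Q → Q × ℕ)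
    (r : ℕ → RFun Q) (q : ℕ → Q × ℕ) : Prop :=
  ∀ i, q i = σ ((List.range i).map fun j => (r j, q j)) (r i)

/-- Player O wins the abstract game `G(A)`: she has a strategy that always
picks states in the domain of the function just picked by Player I, such that
in every consistent play against legal moves of Player I the maximal color
occurring infinitely often among her picked states is even. -/
def GWinsO : Prop :=
  ∃ σ : List (RFun Q × (Q × ℕ)) → RFun Q → Q × ℕ,
    (∀ h r', r' ∈ M.Frak → σ h r' ∈ rdom r') ∧
    ∀ r q, M.GLegalI r q → GConsistentO σ r q → MaxEvenInf fun i => (q i).2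

end DPA

/-! ### Prefixes of ω-words -/

section Words

variable {A : Type*}

lemma pre_succ (x : ℕ → A) (k : ℕ) : pre x (k + 1) = pre x k ++ [x k] := by
  simp [pre, List.range_succ]

@[simp] lemma pre_length (x : ℕ → A) (k : ℕ) : (pre x k).length = k := by
  simp [pre]

lemma pre_add (x : ℕ → A) (k m : ℕ) :
    pre x (k + m) = pre x k ++ pre (fun j => x (k + j)) m := by
  simp [pre, List.range_add]

lemma pre_congr {x y : ℕ → A} {k : ℕ} (h : ∀ n < k, x n = y n) : pre x k = pre y k := by
  unfold pre
  exact List.map_congr_left fun n hn => h n (List.mem_range.1 hn)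

/-- The ω-word extending a finite word by an arbitrary letter. It turns operations on
ω-words into operations on finite words. -/
noncomputable def ext [Nonempty A] (w : List A) : ℕ → A :=
  fun n => w.getD n (Classical.arbitrary A)

lemma ext_pre [Nonempty A] (x : ℕ → A) {n k : ℕ} (h : n < k) : ext (pre x k) n = x n := by
  simp [ext, pre, h]

lemma pre_ext_self [Nonempty A] (w : List A) : pre (ext w) w.length = w := by
  apply List.ext_getElem
  · simp
  · intro n h1 h2
    simp [pre, ext, h2]

lemma ext_append [Nonempty A] (w v : List A) {n : ℕ} (h : n < w.length) :
    ext (w ++ v) n = ext w n := by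
  simp [ext, List.getElem?_append_left h]

end Words

/-! ### The parity condition on windows -/

/-- For bounded sequences, the maximal value occurring infinitely often is the limit superior. -/
lemma maxEvenInf_iff {c : ℕ → ℕ} {N : ℕ} (hb : ∀ n, c n ≤ N) :
    MaxEvenInf c ↔ ∃ k, Even k ∧ (∀ m, ∃ n ≥ m, k ≤ c n) ∧ ∃ m, ∀ n ≥ m, c n ≤ k := by
  constructor
  · rintro ⟨k, hk, hinf, hmax⟩
    refine ⟨k, hk, fun m => ?_, ?_⟩
    · obtain ⟨n, hn, hm⟩ := hinf.exists_gt m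
      exact ⟨n, hm.le, (show c n = k from hn).ge⟩
    · have hfin : (⋃ k' ∈ Set.Ioc k N, {n | c n = k'}).Finite := by
        refine (Set.finite_Ioc k N).biUnion fun k' hk' => ?_
        by_contra h
        exact absurd (hmax k' h) (not_le.2 hk'.1)
      obtain ⟨m, hm⟩ := hfin.bddAbove
      refine ⟨m + 1, fun n hn => ?_⟩
      by_contra h
      have : n ≤ m := hm (by simp only [Set.mem_iUnion]; exact ⟨c n, ⟨by omega, hb n⟩, rfl⟩)
      omega
  · rintro ⟨k, hk, hinf, m, hm⟩
    refine ⟨k, hk, ?_, fun k' hk' => ?_⟩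
    · rw [← Nat.frequently_atTop_iff_infinite, Filter.frequently_atTop]
      intro a
      obtain ⟨n, hn, hkn⟩ := hinf (max a m)
      exact ⟨n, le_trans (le_max_left _ _) hn,
        le_antisymm (hm n (le_trans (le_max_right _ _) hn)) hkn⟩
    · obtain ⟨n, hn, hmn⟩ := hk'.exists_gt m
      exact (show c n = k' from hn) ▸ hm n hmn.le

lemma exists_window {s : ℕ → ℕ} (h0 : s 0 = 0) (hs : StrictMono s) (n : ℕ) :
    ∃ K, s K ≤ n ∧ n < s (K + 1) := by
  induction n with
  | zero => exact ⟨0, h0.le, h0.symm.trans_lt (hs Nat.zero_lt_one)⟩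
  | succ n ih =>
    obtain ⟨K, h1, h2⟩ := ih
    rcases Nat.lt_or_ge (n + 1) (s (K + 1)) with h | h
    · exact ⟨K, by omega, h⟩
    · exact ⟨K + 1, h, lt_of_le_of_lt (by omega) (hs (Nat.lt_succ_self (K + 1)))⟩

/-- Replacing a bounded sequence by its maxima over consecutive (overlapping) windows does not
change the parity condition. The window of index `0` is `{0}`, since `0 - 1 = 0`. -/
lemma maxEvenInf_window {c : ℕ → ℕ} {N : ℕ} (hb : ∀ n, c n ≤ N) {s : ℕ → ℕ} (h0 : s 0 = 0)
    (hs : StrictMono s) :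
    MaxEvenInf (fun k => (Finset.Icc (s (k - 1)) (s k)).sup c) ↔ MaxEvenInf c := by
  have hb' : ∀ k, (Finset.Icc (s (k - 1)) (s k)).sup c ≤ N := fun k =>
    Finset.sup_le fun n _ => hb n
  rw [maxEvenInf_iff hb, maxEvenInf_iff hb']
  refine exists_congr fun k => and_congr Iff.rfl (and_congr ⟨fun h m => ?_, fun h m => ?_⟩
    ⟨?_, ?_⟩)
  · obtain ⟨K, hK, hk⟩ := h (m + 1)
    have hne : (Finset.Icc (s (K - 1)) (s K)).Nonempty :=
      Finset.nonempty_Icc.2 (hs.monotone (Nat.sub_le K 1))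
    obtain ⟨n, hn, he⟩ := Finset.exists_mem_eq_sup _ hne c
    have h1 := (Finset.mem_Icc.1 hn).1
    have h2 : K - 1 ≤ s (K - 1) := hs.le_apply
    exact ⟨n, by omega, by rw [← he]; exact hk⟩
  · obtain ⟨n, hn, hk⟩ := h (s m)
    obtain ⟨K, h1, h2⟩ := exists_window h0 hs n
    have h3 : m < K + 1 := hs.lt_iff_lt.1 (lt_of_le_of_lt hn h2)
    exact ⟨K + 1, h3.le, hk.trans (Finset.le_sup (f := c) (Finset.mem_Icc.2 ⟨h1, h2.le⟩))⟩
  · rintro ⟨m, hm⟩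
    refine ⟨s m, fun n hn => ?_⟩
    obtain ⟨K, h1, h2⟩ := exists_window h0 hs n
    have h3 : m < K + 1 := hs.lt_iff_lt.1 (lt_of_le_of_lt hn h2)
    exact le_trans (Finset.le_sup (f := c) (Finset.mem_Icc.2 ⟨h1, h2.le⟩)) (hm (K + 1) h3.le)
  · rintro ⟨m, hm⟩
    refine ⟨m + 1, fun K hK => Finset.sup_le fun n hn => hm n ?_⟩
    have h1 := (Finset.mem_Icc.1 hn).1
    have h2 : K - 1 ≤ s (K - 1) := hs.le_apply
    omega

/-! ### Blocks of a delay game -/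

section Blocks

variable {I : Type*}

/-- The number of letters Player I has picked before round `n`. -/
def blockSum (f : ℕ → ℕ) (n : ℕ) : ℕ := ∑ j ∈ Finset.range n, f j

lemma blockSum_mono (f : ℕ → ℕ) : Monotone (blockSum f) := by
  refine monotone_nat_of_le_succ fun n => ?_
  simp [blockSum, Finset.sum_range_succ]

lemma flatten_length {f : ℕ → ℕ} {u : ℕ → List I} (hu : ValidBlocks f u) (i : ℕ) :
    ((List.range i).map u).flatten.length = blockSum f i := by
  induction i with
  | zero => simp [blockSum]
  | succ i ih =>
    simp only [List.range_succ, List.map_append, List.flatten_append, List.length_append, ih]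
    simp [blockSum, Finset.sum_range_succ, hu i]

lemma flatten_eq_pre {f : ℕ → ℕ} {u : ℕ → List I} {α : ℕ → I} (hu : ValidBlocks f u)
    (hα : IsCat u α) (i : ℕ) : ((List.range i).map u).flatten = pre α (blockSum f i) := by
  rw [hα i, flatten_length hu i, pre]

/-- Player I can produce every ω-word in blocks of the prescribed lengths. -/
lemma exists_blocks (f : ℕ → ℕ) (α : ℕ → I) : ∃ u, ValidBlocks f u ∧ IsCat u α := by
  have hu : ValidBlocks f fun i => pre (fun j => α (blockSum f i + j)) (f i) := fun i => by simp
  refine ⟨_, hu, fun i => ?_⟩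
  rw [flatten_length hu]
  induction i with
  | zero => simp [blockSum]
  | succ i ih =>
    have : blockSum f (i + 1) = blockSum f i + f i := by simp [blockSum, Finset.sum_range_succ]
    rw [this]
    simp only [List.range_succ, List.map_append, List.flatten_append, ih]
    simpa [pre] using (pre_add α (blockSum f i) (f i)).symm

end Blocks

namespace DPA

variable {Q I O : Type*} (M : DPA Q (I × O))

/-! ### Runs of the color-tracking automaton -/

/-- The run of `𝒞` on an ω-word from an arbitrary state. -/
def runC (q : Q × ℕ) (x : ℕ → I × O) : ℕ → Q × ℕ
  | 0 => q
  | n + 1 => M.transC (runC q x n) (x n)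

lemma runC_congr (q : Q × ℕ) {x y : ℕ → I × O} {n : ℕ} (h : ∀ j < n, x j = y j) :
    M.runC q x n = M.runC q y n := by
  induction n with
  | zero => rfl
  | succ n ih => simp only [runC, ih fun j hj => h j (by omega), h n (by omega)]

lemma run_congr {x y : ℕ → I × O} {n : ℕ} (h : ∀ j < n, x j = y j) :
    M.run x n = M.run y n := by
  induction n with
  | zero => rfl
  | succ n ih => simp only [run, ih fun j hj => h j (by omega), h n (by omega)]

/-- Started with the color of the current state, `𝒞` records the maximal color of the run of `M`
seen since then, both end points included. -/
lemma runC_shift (x : ℕ → I × O) (a n : ℕ) :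
    M.runC (M.run x a, M.color (M.run x a)) (fun j => x (a + j)) n =
      (M.run x (a + n), (Finset.Icc a (a + n)).sup fun m => M.color (M.run x m)) := by
  induction n with
  | zero => simp [runC]
  | succ n ih =>
    have hI : Finset.Icc a (a + n + 1) = insert (a + n + 1) (Finset.Icc a (a + n)) := by
      ext m
      simp only [Finset.mem_Icc, Finset.mem_insert]
      omega
    rw [← add_assoc, hI, Finset.sup_insert]
    simp only [runC, ih, transC, run]
    rw [sup_comm]

lemma mem_transP {S : Set (Q × ℕ)} {a : I} {q : Q × ℕ} :
    q ∈ M.transP S a ↔ ∃ s ∈ S, ∃ b : O, q = M.transC s (a, b) := by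
  simp only [transP, Set.mem_iUnion, Set.mem_singleton_iff, exists_prop]

lemma transPStar_pre_succ (S : Set (Q × ℕ)) (α : ℕ → I) (n : ℕ) :
    M.transPStar S (pre α (n + 1)) = M.transP (M.transPStar S (pre α n)) (α n) := by
  simp [transPStar, pre_succ]

lemma mem_transPStar_pre [Nonempty O] {q q' : Q × ℕ} {α : ℕ → I} {n : ℕ} :
    q' ∈ M.transPStar {q} (pre α n) ↔ ∃ o : ℕ → O, M.runC q (fun j => (α j, o j)) n = q' := by
  induction n generalizing q' with
  | zero => simp [transPStar, pre, runC, eq_comm]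
  | succ n ih =>
    rw [transPStar_pre_succ, mem_transP]
    constructor
    · rintro ⟨s, hs, b, rfl⟩
      obtain ⟨o, ho⟩ := ih.1 hs
      refine ⟨Function.update o n b, ?_⟩
      have : M.runC q (fun j => (α j, Function.update o n b j)) n = s := by
        rw [← ho]
        refine M.runC_congr q fun j hj => ?_
        simp [Function.update_of_ne hj.ne]
      simp [runC, this]
    · rintro ⟨o, rfl⟩
      exact ⟨_, ih.2 ⟨o, rfl⟩, o n, rfl⟩

lemma transPStar_nonempty [Nonempty O] {S : Set (Q × ℕ)} (hS : S.Nonempty) (w : List I) :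
    (M.transPStar S w).Nonempty := by
  induction w generalizing S with
  | nil => exact hS
  | cons a w ih =>
    obtain ⟨s, hs⟩ := hS
    obtain ⟨b⟩ := ‹Nonempty O›
    exact ih ⟨_, M.mem_transP.2 ⟨s, hs, b, rfl⟩⟩

lemma transPStar_valid {S : Set (Q × ℕ)} (hS : S ⊆ M.QCvalid) (w : List I) :
    M.transPStar S w ⊆ M.QCvalid := by
  induction w generalizing S with
  | nil => exact hS
  | cons a w ih =>
    refine ih fun q hq => ?_
    obtain ⟨s, hs, b, rfl⟩ := M.mem_transP.1 hq
    have h : s.2 ∈ Set.range M.color := hS hs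
    show max s.2 (M.color (M.trans s.1 (a, b))) ∈ Set.range M.color
    rcases max_choice s.2 (M.color (M.trans s.1 (a, b))) with h' | h' <;> rw [h']
    · exact h
    · exact ⟨_, rfl⟩

/-! ### Partial functions with infinitely many witnesses -/

@[simp] lemma rdom_rOf (D : Set (Q × ℕ)) (w : List I) : rdom (M.rOf D w) = D := by
  ext q
  by_cases h : q ∈ D <;> simp [rdom, rOf, h]

lemma rOf_apply {D : Set (Q × ℕ)} {q : Q × ℕ} (hq : q ∈ D) (w : List I) :
    (M.rOf D w q).getD ∅ = M.transPStar {(q.1, M.color q.1)} w := by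
  simp [rOf, hq]

lemma exists_long_witness [Finite I] {r : RFun Q} (hr : r ∈ M.Frak) (n : ℕ) :
    ∃ w ∈ M.WitnessSet r, n < w.length := by
  by_contra! h
  exact hr.2 ((List.finite_length_le I n).subset h)

/-- All sufficiently long words induce functions in `𝔉`: words inducing the same function on all
of `Q` form an equivalence relation of finite index, so only finitely many words lie in finite
classes. -/
lemma exists_long_frak [Finite Q] [Finite I] :
    ∃ d, 0 < d ∧ ∀ (D : Set (Q × ℕ)) (w : List I), D.Nonempty → w.length = d →
      M.rOf D w ∈ M.Frak := by
  let T : List I → Q → Set (Q × ℕ) := fun w q => M.transPStar {(q, M.color q)} w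
  have hV : M.QCvalid.Finite := by
    refine ((Set.finite_univ (α := Q)).prod (Set.finite_range M.color)).subset fun q hq => ?_
    exact ⟨trivial, hq⟩
  have hT : (Set.range T).Finite := by
    refine (Set.Finite.pi' fun _ : Q => hV.powerset).subset ?_
    rintro _ ⟨w, rfl⟩ q
    refine M.transPStar_valid ?_ w
    rintro _ rfl
    exact ⟨q, rfl⟩
  have hB : {w | {w' | T w' = T w}.Finite}.Finite := by
    have h : (⋃ t ∈ {t ∈ Set.range T | {w' | T w' = t}.Finite}, {w' | T w' = t}).Finite :=
      (hT.subset fun t ht => ht.1).biUnion fun t ht => ht.2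
    refine h.subset fun w hw => ?_
    simp only [Set.mem_iUnion]
    exact ⟨T w, ⟨⟨w, rfl⟩, hw⟩, rfl⟩
  obtain ⟨N, hN⟩ := (hB.image List.length).bddAbove
  refine ⟨N + 1, Nat.succ_pos N, fun D w hD hw => ⟨by simpa using hD, ?_⟩⟩
  have hinf : {w' | T w' = T w}.Infinite := by
    intro h
    have : w.length ≤ N := hN ⟨w, h, rfl⟩
    omega
  refine hinf.mono fun w' hw' => ?_
  show M.rOf D w = M.rOf (rdom (M.rOf D w)) w'
  rw [rdom_rOf]
  funext q
  have : T w' q.1 = T w q.1 := congrFun hw' q.1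
  simp only [T] at this
  simp [rOf, this]

lemma exists_color_bound [Finite Q] : ∃ N, ∀ q, M.color q ≤ N := by
  obtain ⟨N, hN⟩ := (Set.finite_range M.color).bddAbove
  exact ⟨N, fun q => hN ⟨q, rfl⟩⟩

/-! ### From the abstract game to a delay game -/

section FromAbstract

variable (σ : List (RFun Q × (Q × ℕ)) → RFun Q → Q × ℕ)

/-- The history of the first `k` rounds of `G(A)`, together with the domain required in round `k`,
when Player I plays the functions induced by the words `w 0, w 1, …` and Player O plays `σ`. -/
noncomputable def absState (w : ℕ → List I) : ℕ → List (RFun Q × (Q × ℕ)) × Set (Q × ℕ)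
  | 0 => ([], {M.initC})
  | k + 1 =>
    ((absState w k).1 ++ [(M.rOf (absState w k).2 (w k),
        σ (absState w k).1 (M.rOf (absState w k).2 (w k)))],
      (M.rOf (absState w k).2 (w k)
        (σ (absState w k).1 (M.rOf (absState w k).2 (w k)))).getD ∅)

/-- Player I's move in round `k` of the play of `absState`. -/
noncomputable def absR (w : ℕ → List I) (k : ℕ) : RFun Q :=
  M.rOf (M.absState σ w k).2 (w k)

/-- Player O's answer in round `k` of the play of `absState`. -/
noncomputable def absQ (w : ℕ → List I) (k : ℕ) : Q × ℕ :=
  σ (M.absState σ w k).1 (M.absR σ w k)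

lemma absState_congr {w w' : ℕ → List I} {k : ℕ} (h : ∀ j < k, w j = w' j) :
    M.absState σ w k = M.absState σ w' k := by
  induction k with
  | zero => rfl
  | succ k ih => simp only [absState, ih fun j hj => h j (by omega), h k (by omega)]

lemma absQ_congr {w w' : ℕ → List I} {k : ℕ} (h : ∀ j ≤ k, w j = w' j) :
    M.absQ σ w k = M.absQ σ w' k := by
  simp only [absQ, absR, M.absState_congr σ fun j (hj : j < k) => h j hj.le, h k le_rfl]

lemma absState_fst (w : ℕ → List I) (k : ℕ) :
    (M.absState σ w k).1 = (List.range k).map fun j => (M.absR σ w j, M.absQ σ w j) := by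
  induction k with
  | zero => rfl
  | succ k ih =>
    rw [List.range_succ, List.map_append, ← ih]
    rfl

open scoped Classical in
/-- A sequence of outputs leading `𝒞` from `q` (with its color reset) to `q'` on the input word
`w`, if there is one. -/
noncomputable def outs [Nonempty O] (q q' : Q × ℕ) (w : List I) : ℕ → O :=
  if h : ∃ o : ℕ → O, ∀ α : ℕ → I, pre α w.length = w →
      M.runC (q.1, M.color q.1) (fun j => (α j, o j)) w.length = q'
  then h.choose else fun _ => Classical.arbitrary O

lemma outs_spec [Nonempty O] [Nonempty I] {q q' : Q × ℕ} {α : ℕ → I} {n : ℕ}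
    (h : q' ∈ M.transPStar {(q.1, M.color q.1)} (pre α n)) :
    M.runC (q.1, M.color q.1) (fun j => (α j, M.outs q q' (pre α n) j)) n = q' := by
  have hex : ∃ o : ℕ → O, ∀ β : ℕ → I, pre β (pre α n).length = pre α n →
      M.runC (q.1, M.color q.1) (fun j => (β j, o j)) (pre α n).length = q' := by
    obtain ⟨o, ho⟩ := M.mem_transPStar_pre.1 h
    refine ⟨o, fun β hβ => ?_⟩
    rw [pre_length] at hβ ⊢
    rw [← ho]
    refine M.runC_congr _ fun j hj => ?_
    rw [← ext_pre β hj, hβ, ext_pre α hj]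
  have hspec := hex.choose_spec α (by rw [pre_length])
  rw [outs, dif_pos hex]
  exact (congrArg _ (pre_length α n).symm).trans hspec

/-- The `k`-th block of length `d` of an ω-word. -/
def chunk (d : ℕ) (α : ℕ → I) (k : ℕ) : List I := pre (fun j => α (k * d + j)) d

/-- The outputs of Player O in the delay game obtained by cutting the input into blocks of length
`d`. Within block `k`, she moves from the state `absQ k` to `absQ (k + 1)`; the latter is known
once block `k + 1` is. -/
noncomputable def reply [Nonempty O] (d : ℕ) (α : ℕ → I) (n : ℕ) : O :=
  M.outs (M.absQ σ (chunk d α) (n / d)) (M.absQ σ (chunk d α) (n / d + 1))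
    (chunk d α (n / d)) (n % d)

/-- A lookahead of two blocks suffices to compute `reply`. -/
lemma reply_congr [Nonempty O] {d n : ℕ} {α β : ℕ → I}
    (h : ∀ j < 2 * d + n, α j = β j) : M.reply σ d α n = M.reply σ d β n := by
  have hc : ∀ k ≤ n / d + 1, chunk d α k = chunk d β k := by
    intro k hk
    refine pre_congr fun j hj => h _ ?_
    have h1 : k * d ≤ (n / d + 1) * d := Nat.mul_le_mul_right d hk
    have h2 : n / d * d ≤ n := Nat.div_mul_le_self n d
    have h3 : (n / d + 1) * d = n / d * d + d := by ring
    omega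
  unfold reply
  rw [M.absQ_congr σ fun j hj => hc j (by omega), M.absQ_congr σ hc, hc _ (by omega)]

variable {σ}

lemma absR_frak [Nonempty O] (hσ : ∀ h r', r' ∈ M.Frak → σ h r' ∈ rdom r') {d : ℕ}
    (hd : ∀ (D : Set (Q × ℕ)) (w : List I), D.Nonempty → w.length = d → M.rOf D w ∈ M.Frak)
    {w : ℕ → List I} (hw : ∀ k, (w k).length = d) (k : ℕ) : M.absR σ w k ∈ M.Frak := by
  have hne : (M.absState σ w k).2.Nonempty := by
    induction k with
    | zero => exact ⟨_, rfl⟩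
    | succ k ih =>
      have hq := hσ (M.absState σ w k).1 _ (hd _ _ ih (hw k))
      rw [rdom_rOf] at hq
      show ((M.rOf (M.absState σ w k).2 (w k)
        (σ (M.absState σ w k).1 (M.rOf (M.absState σ w k).2 (w k)))).getD ∅).Nonempty
      rw [M.rOf_apply hq]
      exact M.transPStar_nonempty (Set.singleton_nonempty _) _
  exact hd _ _ hne (hw k)

/-- A winning strategy for `G(A)` yields one for the delay game in which Player I starts with
`2 * d` letters, where words of length `d` induce functions in `𝔉`. -/
theorem winsO_of_gWinsO [Finite Q] [Finite I] [Nonempty I] [Nonempty O] (h : M.GWinsO) :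
    ∃ f, IsDelay f ∧ WinsO f M.Lparity := by
  obtain ⟨σ, hσ, hwin⟩ := h
  obtain ⟨d, hd0, hd⟩ := M.exists_long_frak
  obtain ⟨N, hN⟩ := M.exists_color_bound
  let f : ℕ → ℕ := fun i => if i = 0 then 2 * d else 1
  have hf : ∀ i, blockSum f (i + 1) = 2 * d + i := by
    intro i
    induction i with
    | zero => simp [blockSum, f]
    | succ i ih =>
      have : blockSum f (i + 1 + 1) = blockSum f (i + 1) + f (i + 1) := by
        rw [blockSum, Finset.sum_range_succ, blockSum]
      rw [this, ih]
      simp [f, add_assoc]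
  refine ⟨f, fun i => ?_, fun w => M.reply σ d (ext w) (w.length - 2 * d), ?_⟩
  · simp only [f]
    split_ifs <;> omega
  intro u v α hu hv hα
  have hvr : ∀ n, v n = M.reply σ d α n := by
    intro n
    rw [hv n, flatten_eq_pre hu hα, hf]
    beta_reduce
    rw [pre_length, Nat.add_sub_cancel_left]
    exact M.reply_congr σ fun j hj => ext_pre α hj
  set w := chunk d α with hw
  have hwl : ∀ k, (w k).length = d := fun k => by simp [hw, chunk]
  have hfrak := fun k => M.absR_frak hσ hd hwl k
  have hmem : ∀ k, M.absQ σ w k ∈ (M.absState σ w k).2 := by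
    intro k
    have := hσ (M.absState σ w k).1 _ (hfrak k)
    rwa [absR, rdom_rOf] at this
  have hleg : M.GLegalI (M.absR σ w) (M.absQ σ w) := by
    refine ⟨hfrak, ?_, fun i => ?_⟩
    · rw [absR, rdom_rOf]; rfl
    · rw [absR, rdom_rOf]; rfl
  have hcons : GConsistentO σ (M.absR σ w) (M.absQ σ w) := by
    intro i
    rw [← M.absState_fst σ w i]
    rfl
  have hres := hwin _ _ hleg hcons
  set x : ℕ → I × O := fun n => (α n, v n) with hx
  have hstep : ∀ k, M.absQ σ w k = (M.run x (k * d),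
      (Finset.Icc ((k - 1) * d) (k * d)).sup fun m => M.color (M.run x m)) := by
    intro k
    induction k with
    | zero =>
      have : M.absQ σ w 0 = M.initC := hmem 0
      simp [this, initC, run]
    | succ k ih =>
      have h1 : M.absQ σ w (k + 1) ∈
          M.transPStar {((M.absQ σ w k).1, M.color (M.absQ σ w k).1)} (w k) := by
        rw [← M.rOf_apply (hmem k) (w k)]
        exact hmem (k + 1)
      have h2 := M.outs_spec h1
      have h3 := M.runC_shift x (k * d) d
      have h4 : (M.absQ σ w k).1 = M.run x (k * d) := by rw [ih]
      rw [h4] at h2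
      rw [← h2, show (k + 1) * d = k * d + d by ring, Nat.add_sub_cancel, ← h3]
      refine M.runC_congr _ fun j hj => ?_
      have h5 : (k * d + j) / d = k := by
        rw [mul_comm, Nat.mul_add_div hd0, Nat.div_eq_of_lt hj, add_zero]
      have h6 : (k * d + j) % d = j := by
        rw [mul_comm, Nat.mul_add_mod, Nat.mod_eq_of_lt hj]
      simp only [hx, hvr, reply, h5, h6]
      rfl
  have hfun : (fun i => (M.absQ σ w i).2) = fun k =>
      (Finset.Icc ((k - 1) * d) (k * d)).sup fun m => M.color (M.run x m) := by
    funext k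
    rw [hstep k]
  rw [hfun] at hres
  exact (maxEvenInf_window (c := fun m => M.color (M.run x m)) (fun n => hN _)
    (s := fun k => k * d) (Nat.zero_mul d) fun a b hab => Nat.mul_lt_mul_of_pos_right hab hd0).1 hres

end FromAbstract

/-! ### From a delay game to the abstract game -/

section ToAbstract

variable (f : ℕ → ℕ) (τ : List I → O)

open scoped Classical in
/-- A witness of `r` that is longer than the input needed by Player O in the delay game to
determine her first `n` letters. -/
noncomputable def pickWord (r : RFun Q) (n : ℕ) : List I :=
  if h : ∃ w ∈ M.WitnessSet r, blockSum f n < w.length then h.choose else []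

lemma pickWord_spec [Finite I] {r : RFun Q} (hr : r ∈ M.Frak) (n : ℕ) :
    r = M.rOf (rdom r) (M.pickWord f r n) ∧ blockSum f n < (M.pickWord f r n).length := by
  have h := M.exists_long_witness hr (blockSum f n)
  rw [pickWord, dif_pos h]
  exact h.choose_spec

/-- The input word of the delay game simulating the moves `l` of Player I in `G(A)`: the
concatenation of sufficiently long witnesses. -/
noncomputable def simWord (l : List (RFun Q)) : List I :=
  l.foldl (fun acc r => acc ++ M.pickWord f r acc.length) []

/-- The outcome of the delay game with input `α` when Player O plays `τ`. -/
def outcome (α : ℕ → I) (n : ℕ) : I × O := (α n, τ (pre α (blockSum f (n + 1))))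

/-- The state picked by Player O in `G(A)` in reply to `r'` after the moves `l`: the state
reached in the simulated delay game after the word for `l`, with the maximal color seen since the
end of the preceding word. The witness for `r'` provides the lookahead. -/
noncomputable def candidate [Nonempty I] (l : List (RFun Q)) (r' : RFun Q) : Q × ℕ :=
  (M.run (outcome f τ (ext (M.simWord f (l ++ [r'])))) (M.simWord f l).length,
    (Finset.Icc (M.simWord f l.dropLast).length (M.simWord f l).length).sup fun m =>
      M.color (M.run (outcome f τ (ext (M.simWord f (l ++ [r'])))) m))

open scoped Classical in
/-- Player O's strategy in `G(A)`: play `candidate`, or any legal state if that is not legal. -/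
noncomputable def simStrategy [Nonempty I] (h : List (RFun Q × (Q × ℕ))) (r' : RFun Q) : Q × ℕ :=
  if M.candidate f τ (h.map Prod.fst) r' ∈ rdom r' then M.candidate f τ (h.map Prod.fst) r'
  else if hne : (rdom r').Nonempty then hne.choose else M.initC

lemma simStrategy_mem [Nonempty I] (h : List (RFun Q × (Q × ℕ))) {r' : RFun Q}
    (hr : r' ∈ M.Frak) : M.simStrategy f τ h r' ∈ rdom r' := by
  unfold simStrategy
  split_ifs with h1 h2
  · exact h1
  · exact h2.choose_spec
  · exact absurd hr.1 h2

/-- A winning strategy for a delay game yields one for `G(A)`: the simulated delay game reaches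
exactly the states `candidate`, which are therefore legal, and its outcome is winning. -/
theorem gWinsO_of_winsO [Finite Q] [Finite I] [Nonempty I] [Nonempty O]
    (h : WinsO f M.Lparity) : M.GWinsO := by
  obtain ⟨τ, hτ⟩ := h
  obtain ⟨N, hN⟩ := M.exists_color_bound
  refine ⟨M.simStrategy f τ, fun h r' hr => M.simStrategy_mem f τ h hr, ?_⟩
  rintro r q ⟨hfrak, hdom0, hdom⟩ hcons
  set P : ℕ → List I := fun i => M.simWord f ((List.range i).map r) with hP
  set s : ℕ → ℕ := fun i => (P i).length with hs
  have hPs : ∀ i, P (i + 1) = P i ++ M.pickWord f (r i) (s i) := by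
    intro i
    simp [hP, hs, simWord, List.range_succ]
  have hpick := fun i => M.pickWord_spec f (hfrak i) (s i)
  have hss : ∀ i, s (i + 1) = s i + (M.pickWord f (r i) (s i)).length := by
    intro i
    simp only [hs, hPs i, List.length_append]
  have hmono : StrictMono s := strictMono_nat_of_lt_succ fun i => by
    have := (hpick i).2
    rw [hss]; omega
  -- Lookahead: the first `s i` outputs are determined by the first `s (i + 1)` inputs.
  have hlook : ∀ i, blockSum f (s i) ≤ s (i + 1) := fun i => by
    have := (hpick i).2
    rw [hss]; omega
  have hext : ∀ i j n, i ≤ j → n < s i → ext (P j) n = ext (P i) n := by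
    intro i j n hij hn
    induction j, hij using Nat.le_induction with
    | base => rfl
    | succ j hij ih =>
      rw [hPs, ext_append _ _ (lt_of_lt_of_le hn (hmono.monotone hij)), ih]
  -- The limit of the words `P i`.
  set α : ℕ → I := fun n => ext (P (n + 1)) n with hα
  have hαP : ∀ i n, n < s i → ext (P i) n = α n := by
    intro i n hn
    have h1 : n < s (n + 1) := lt_of_lt_of_le (Nat.lt_succ_self n) hmono.le_apply
    rcases le_total i (n + 1) with h | h
    · exact (hext i (n + 1) n h hn).symm
    · exact hext (n + 1) i n h h1
  have hword : ∀ i, M.pickWord f (r i) (s i) =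
      pre (fun j => α (s i + j)) (M.pickWord f (r i) (s i)).length := by
    intro i
    have h1 : P (i + 1) = pre α (s (i + 1)) := by
      rw [← pre_congr fun n hn => hαP (i + 1) n hn]
      exact (pre_ext_self _).symm
    have h2 : P i = pre α (s i) := by
      rw [← pre_congr fun n hn => hαP i n hn]
      exact (pre_ext_self _).symm
    rw [hPs, hss, pre_add, ← h2] at h1
    exact List.append_cancel_left h1
  set x := outcome f τ α with hx
  have hrun : ∀ i m, m ≤ s i →
      M.run (outcome f τ (ext (P (i + 1)))) m = M.run x m := by
    intro i m hm
    refine M.run_congr fun n hn => ?_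
    have h1 : blockSum f (n + 1) ≤ s (i + 1) :=
      (blockSum_mono f (by omega)).trans (hlook i)
    have h2 : s i < s (i + 1) := hmono (Nat.lt_succ_self i)
    simp only [hx, outcome]
    rw [hαP (i + 1) n (by omega), pre_congr fun k hk => hαP (i + 1) k (by omega)]
  have hcand : ∀ i, M.candidate f τ ((List.range i).map r) (r i) = (M.run x (s i),
      (Finset.Icc (s (i - 1)) (s i)).sup fun m => M.color (M.run x m)) := by
    intro i
    have h1 : ((List.range i).map r).dropLast = (List.range (i - 1)).map r := by
      cases i <;> simp [List.range_succ]
    have h2 : (List.range i).map r ++ [r i] = (List.range (i + 1)).map r := by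
      simp [List.range_succ]
    rw [candidate, h1, h2]
    refine Prod.ext (hrun i (s i) le_rfl) ?_
    dsimp only
    refine Finset.sup_congr rfl fun m hm => ?_
    rw [← hrun i m (Finset.mem_Icc.1 hm).2]
  have hqc : ∀ i, M.candidate f τ ((List.range i).map r) (r i) ∈ rdom (r i) →
      q i = M.candidate f τ ((List.range i).map r) (r i) := by
    intro i hi
    have hm : ((List.range i).map fun j => (r j, q j)).map Prod.fst = (List.range i).map r := by
      simp [Function.comp_def]
    rw [hcons i, simStrategy, hm, if_pos hi]
  have hlegal : ∀ i, M.candidate f τ ((List.range i).map r) (r i) ∈ rdom (r i) := by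
    intro i
    induction i with
    | zero =>
      rw [hdom0, hcand 0]
      simp [hs, hP, simWord, initC, run]
    | succ i ih =>
      have hq := hqc i ih
      have hqi : q i ∈ rdom (r i) := hq ▸ ih
      have hq1 : (q i).1 = M.run x (s i) := by rw [hq, hcand i]
      have h1 : (r i (q i)).getD ∅ =
          M.transPStar {((q i).1, M.color (q i).1)} (M.pickWord f (r i) (s i)) := by
        rw [← M.rOf_apply hqi, ← (hpick i).1]
      rw [hdom, h1, hcand, hq1, hword i, M.mem_transPStar_pre]
      refine ⟨fun j => (x (s i + j)).2, ?_⟩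
      have h3 := M.runC_shift x (s i) (M.pickWord f (r i) (s i)).length
      rw [← hss] at h3
      exact h3
  have hfun : (fun i => (q i).2) = fun i =>
      (Finset.Icc (s (i - 1)) (s i)).sup fun m => M.color (M.run x m) := by
    funext i
    rw [hqc i (hlegal i), hcand i]
  rw [hfun]
  refine (maxEvenInf_window (c := fun m => M.color (M.run x m)) (fun n => hN _) ?_ hmono).2 ?_
  · simp [hs, hP, simWord]
  · obtain ⟨u, hu, hcat⟩ := exists_blocks f α
    refine hτ u (fun n => (x n).2) α hu (fun i => ?_) hcat
    rw [flatten_eq_pre hu hcat]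
    rfl

end ToAbstract

end DPA

/-- Player O wins the delay game `Γ_f(L_p(A))` for some delay
function `f` if and only if she wins the abstract game `G(A)`. -/
theorem stmt12 {Q I O : Type*} [Fintype Q] [Fintype I] [Fintype O]
    [Nonempty I] [Nonempty O] (M : DPA Q (I × O)) :
    (∃ f, IsDelay f ∧ WinsO f M.Lparity) ↔ M.GWinsO := by
  exact ⟨fun ⟨f, _, h⟩ => M.gWinsO_of_winsO f h, fun h => M.winsO_of_gWinsO h⟩

end DelayGames
end
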